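/- Let H be a Hopf algebra over K and let (M, μ) be a right H-Hopf module algebra. Then the K-linear map P_R : M → M defined by P_R(m) = ∑ m₍₀₎ · S(m₍₁₎) is a Rota-Baxter operator of weight -1 on M, i.e. P_R(m)P_R(m') = P_R(m P_R(m')) + P_R(P_R(m) m') − P_R(mm') for all m, m' ∈ M. -/

import Mathlib

/-!
STATEMENT 0: If `(M, μ)` is a right `H`-Hopf module algebra over a Hopf algebra `H`,
then `P_R(m) = ∑ m₍₀₎ · S(m₍₁₎)` is a Rota-Baxter operator of weight `-1` on `M`.

The right `H`-module structure is given by a linear map `act : M ⊗ H →ₗ M`,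
the right `H`-comodule structure by `δ : M →ₗ M ⊗ H` (coassociative, counital),
and the various compatibilities are expressed as equalities of linear maps
applied to elements, using Mathlib's structural tensor maps (Sweedler-free form).
-/

open TensorProduct Coalgebra HopfAlgebra LinearMap


section aux
variable {K H M N B : Type*} [Field K] [Ring H] [HopfAlgebra K H] [AddCommGroup M] [Module K M]
  [AddCommGroup N] [Module K N] [Ring B] [Algebra K B]

theorem aux_conv_assoc (δ : M →ₗ[K] M ⊗[K] H)
    (coassoc : ∀ m : M,
      (TensorProduct.assoc K M H H) ((δ.rTensor H) (δ m)) =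
        ((Coalgebra.comul (R := K) (A := H)).lTensor M) (δ m))
    (A : N ⊗[K] B →ₗ[K] N)
    (hA : ∀ (n : N) (b c : B), A (A (n ⊗ₜ[K] b) ⊗ₜ[K] c) = A (n ⊗ₜ[K] (b * c)))
    (f : M →ₗ[K] N) (g g' : H →ₗ[K] B) (m : M) :
    A (TensorProduct.map (A ∘ₗ TensorProduct.map f g ∘ₗ δ) g' (δ m)) =
      A (TensorProduct.map f
        (LinearMap.mul' K B ∘ₗ TensorProduct.map g g' ∘ₗ Coalgebra.comul) (δ m)) := by
  have h1 : ∀ z : M ⊗[K] H, TensorProduct.map f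
        (LinearMap.mul' K B ∘ₗ TensorProduct.map g g' ∘ₗ Coalgebra.comul) z =
      TensorProduct.map f (LinearMap.mul' K B ∘ₗ TensorProduct.map g g')
        ((Coalgebra.comul (R := K) (A := H)).lTensor M z) := by
    intro z
    induction z with
    | zero => simp
    | tmul x y => simp
    | add x y hx hy => simp only [map_add, hx, hy]
  rw [h1, ← coassoc]
  generalize δ m = z
  induction z with
  | zero => simp
  | add x y hx hy => simp only [map_add, hx, hy]
  | tmul x k =>
    simp only [TensorProduct.map_tmul, LinearMap.rTensor_tmul, LinearMap.comp_apply]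
    generalize δ x = w
    induction w with
    | zero => simp
    | add x y hx hy => simp only [map_add, TensorProduct.add_tmul, hx, hy]
    | tmul x h => simp [hA]

theorem aux_conv_one (δ : M →ₗ[K] M ⊗[K] H)
    (counital : ∀ m : M,
      (TensorProduct.rid K M) (((Coalgebra.counit (R := K) (A := H)).lTensor M) (δ m)) = m)
    (A : N ⊗[K] B →ₗ[K] N)
    (hA : ∀ (n : N), A (n ⊗ₜ[K] (1 : B)) = n)
    (f : M →ₗ[K] N) (m : M) :
    A (TensorProduct.map f (Algebra.linearMap K B ∘ₗ Coalgebra.counit (R := K) (A := H)) (δ m))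
      = f m := by
  conv_rhs => rw [← counital m]
  generalize δ m = z
  induction z with
  | zero => simp
  | add x y hx hy => simp only [map_add, hx, hy]
  | tmul x k => simp [Algebra.algebraMap_eq_smul_one, hA]

theorem aux_coinv
    (act : M ⊗[K] H →ₗ[K] M)
    (act_one : ∀ m : M, act (m ⊗ₜ[K] (1 : H)) = m)
    (act_mul : ∀ (m : M) (h h' : H),
      act (act (m ⊗ₜ[K] h) ⊗ₜ[K] h') = act (m ⊗ₜ[K] (h * h')))
    (δ : M →ₗ[K] M ⊗[K] H)
    (coassoc : ∀ m : M,
      (TensorProduct.assoc K M H H) ((δ.rTensor H) (δ m)) =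
        ((Coalgebra.comul (R := K) (A := H)).lTensor M) (δ m))
    (counital : ∀ m : M,
      (TensorProduct.rid K M) (((Coalgebra.counit (R := K) (A := H)).lTensor M) (δ m)) = m)
    (hopf_compat : ∀ (m : M) (h : H),
      δ (act (m ⊗ₜ[K] h)) =
        (TensorProduct.map act (LinearMap.mul' K H))
          ((TensorProduct.tensorTensorTensorComm K M H H H)
            (δ m ⊗ₜ[K] Coalgebra.comul h))) (m : M) :
    δ (act (((antipode (R := K) (A := H)).lTensor M) (δ m))) =
      act (((antipode (R := K) (A := H)).lTensor M) (δ m)) ⊗ₜ[K] (1 : H) := by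
  set P : M →ₗ[K] M := act ∘ₗ (antipode (R := K) (A := H)).lTensor M ∘ₗ δ with hP
  set A : (M ⊗[K] H) ⊗[K] (H ⊗[K] H) →ₗ[K] M ⊗[K] H :=
    TensorProduct.map act (LinearMap.mul' K H) ∘ₗ
      (TensorProduct.tensorTensorTensorComm K M H H H).toLinearMap with hAdef
  have Atmul : ∀ (x : M) (a b c : H), A ((x ⊗ₜ a) ⊗ₜ (b ⊗ₜ c)) = act (x ⊗ₜ b) ⊗ₜ (a * c) := by
    intro x a b c; simp [hAdef]
  have A1 : ∀ n : M ⊗[K] H, A (n ⊗ₜ (1 : H ⊗[K] H)) = n := by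
    intro n
    induction n with
    | zero => simp
    | add x y hx hy => simp only [TensorProduct.add_tmul, map_add, hx, hy]
    | tmul x a => rw [Algebra.TensorProduct.one_def, Atmul]; simp [act_one]
  have A2 : ∀ (n : M ⊗[K] H) (b c : H ⊗[K] H), A (A (n ⊗ₜ b) ⊗ₜ c) = A (n ⊗ₜ (b * c)) := by
    intro n b c
    induction n with
    | zero => simp
    | add x y hx hy => simp only [TensorProduct.add_tmul, map_add, hx, hy]
    | tmul x a =>
      induction b with
      | zero => simp
      | add x y hx hy =>
        simp only [TensorProduct.add_tmul, TensorProduct.tmul_add, add_mul, map_add, hx, hy]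
      | tmul b b' =>
        induction c with
        | zero => simp
        | add x y hx hy =>
          simp only [TensorProduct.tmul_add, mul_add, map_add, hx, hy]
        | tmul c c' => simp [Atmul, act_mul, mul_assoc]
  have hPid : ∀ x : M, act (TensorProduct.map P LinearMap.id (δ x)) = x := by
    intro x
    have := aux_conv_assoc δ coassoc act act_mul LinearMap.id (antipode K) LinearMap.id x
    have e : LinearMap.mul' K H ∘ₗ TensorProduct.map (antipode K) LinearMap.id ∘ₗ
        Coalgebra.comul = Algebra.linearMap K H ∘ₗ Coalgebra.counit :=
      HopfAlgebra.mul_antipode_rTensor_comul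
    rw [e, aux_conv_one δ counital act act_one] at this
    exact this
  set F : M →ₗ[K] M ⊗[K] H := (TensorProduct.mk K M H).flip 1 ∘ₗ P with hF
  have hFD : A ∘ₗ TensorProduct.map F Coalgebra.comul ∘ₗ δ = δ := by
    ext x
    have h1 : ∀ z : M ⊗[K] H, A (TensorProduct.map F Coalgebra.comul z) =
        act.rTensor H ((TensorProduct.assoc K M H H).symm (P.rTensor _
          ((Coalgebra.comul (R := K) (A := H)).lTensor M z))) := by
      intro z
      induction z with
      | zero => simp
      | add x y hx hy => simp only [map_add, hx, hy]
      | tmul x k =>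
        simp only [TensorProduct.map_tmul, LinearMap.lTensor_tmul, LinearMap.rTensor_tmul]
        generalize (Coalgebra.comul (R := K) k) = w
        induction w with
        | zero => simp
        | add x y hx hy => simp only [map_add, TensorProduct.tmul_add, hx, hy]
        | tmul a b => simp [hF, Atmul]
    simp only [LinearMap.comp_apply]
    rw [h1, ← coassoc]
    generalize δ x = z
    induction z with
    | zero => simp
    | add x y hx hy => simp only [map_add, hx, hy]
    | tmul x k =>
      conv_rhs => rw [← hPid x]
      simp only [LinearMap.rTensor_tmul]
      generalize δ x = w
      induction w with
      | zero => simp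
      | add x y hx hy => simp only [map_add, TensorProduct.add_tmul, hx, hy]
      | tmul a b => simp
  have h2 : δ (P m) = A (TensorProduct.map δ (Coalgebra.comul ∘ₗ antipode K) (δ m)) := by
    simp only [hP, LinearMap.comp_apply]
    have : ∀ z : M ⊗[K] H, δ (act ((antipode K).lTensor M z)) =
        A (TensorProduct.map δ (Coalgebra.comul ∘ₗ antipode K) z) := by
      intro z
      induction z with
      | zero => simp
      | add x y hx hy => simp only [map_add, hx, hy]
      | tmul x k => simp [hopf_compat, hAdef]
    exact this _
  have h3 := aux_conv_assoc δ coassoc A A2 F Coalgebra.comul (Coalgebra.comul ∘ₗ antipode K) m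
  rw [hFD] at h3
  have e : LinearMap.mul' K (H ⊗[K] H) ∘ₗ
      TensorProduct.map Coalgebra.comul (Coalgebra.comul ∘ₗ antipode K) ∘ₗ
        Coalgebra.comul = Algebra.linearMap K (H ⊗[K] H) ∘ₗ Coalgebra.counit :=
    congrArg WithConv.ofConv (LinearMap.comul_right_inv (R := K) (C := H))
  rw [e, aux_conv_one δ counital A A1] at h3
  exact h2.trans h3

end aux

theorem rightHopfModuleAlgebra_PR_isRotaBaxter_weight_neg_one
    (K : Type*) [Field K] [CharZero K]
    (H : Type*) [Ring H] [HopfAlgebra K H]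
    (M : Type*) [NonUnitalRing M] [Module K M]
    [SMulCommClass K M M] [IsScalarTower K M M]
    (act : M ⊗[K] H →ₗ[K] M)
    (act_one : ∀ m : M, act (m ⊗ₜ[K] (1 : H)) = m)
    (act_mul : ∀ (m : M) (h h' : H),
      act (act (m ⊗ₜ[K] h) ⊗ₜ[K] h') = act (m ⊗ₜ[K] (h * h')))
    (δ : M →ₗ[K] M ⊗[K] H)
    (coassoc : ∀ m : M,
      (TensorProduct.assoc K M H H) ((δ.rTensor H) (δ m)) =
        ((Coalgebra.comul (R := K) (A := H)).lTensor M) (δ m))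
    (counital : ∀ m : M,
      (TensorProduct.rid K M) (((Coalgebra.counit (R := K) (A := H)).lTensor M) (δ m)) = m)
    (hopf_compat : ∀ (m : M) (h : H),
      δ (act (m ⊗ₜ[K] h)) =
        (TensorProduct.map act (LinearMap.mul' K H))
          ((TensorProduct.tensorTensorTensorComm K M H H H)
            (δ m ⊗ₜ[K] Coalgebra.comul h)))
    (mul_act : ∀ (m m' : M) (h : H),
      act ((m * m') ⊗ₜ[K] h) = m * act (m' ⊗ₜ[K] h))
    (δ_mul : ∀ m m' : M,
      δ (m * m') =
        (TensorProduct.map (LinearMap.mul' K M) (LinearMap.mul' K H))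
          ((TensorProduct.tensorTensorTensorComm K M H M H) (δ m ⊗ₜ[K] δ m'))) :
    ∀ m m' : M,
      (act (((antipode (R := K) (A := H)).lTensor M) (δ m))) *
        (act (((antipode (R := K) (A := H)).lTensor M) (δ m'))) =
      act (((antipode (R := K) (A := H)).lTensor M)
          (δ (m * act (((antipode (R := K) (A := H)).lTensor M) (δ m'))))) +
      act (((antipode (R := K) (A := H)).lTensor M)
          (δ ((act (((antipode (R := K) (A := H)).lTensor M) (δ m))) * m'))) +
      (-1 : K) • act (((antipode (R := K) (A := H)).lTensor M) (δ (m * m'))) := by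
  intro m m'
  have hc := aux_coinv act act_one act_mul δ coassoc counital hopf_compat
  have e1 : act (((antipode (R := K) (A := H)).lTensor M)
          (δ ((act (((antipode (R := K) (A := H)).lTensor M) (δ m))) * m'))) =
      (act (((antipode (R := K) (A := H)).lTensor M) (δ m))) *
        (act (((antipode (R := K) (A := H)).lTensor M) (δ m'))) := by
    rw [δ_mul, hc m]
    generalize act (((antipode (R := K) (A := H)).lTensor M) (δ m)) = p
    generalize δ m' = z
    induction z with
    | zero => simp
    | add x y hx hy => simp only [map_add, TensorProduct.tmul_add, mul_add, hx, hy]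
    | tmul x k => simp [mul_act]
  have e2 : act (((antipode (R := K) (A := H)).lTensor M)
          (δ (m * act (((antipode (R := K) (A := H)).lTensor M) (δ m'))))) =
      act (((antipode (R := K) (A := H)).lTensor M) (δ (m * m'))) := by
    rw [δ_mul, δ_mul, hc m']
    generalize δ m = w
    generalize δ m' = z
    induction w with
    | zero => simp
    | add x y hx hy => simp only [map_add, TensorProduct.add_tmul, hx, hy]
    | tmul x k =>
      induction z with
      | zero => simp
      | add x y hx hy =>
        simp only [map_add, TensorProduct.tmul_add, TensorProduct.add_tmul, hx, hy]
      | tmul y l => simp [mul_act, act_mul, HopfAlgebra.antipode_mul_antidistrib]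
  rw [e1, e2, neg_one_smul]
  abel
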